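/- arXiv:1903.02896 — 2 statements merged into one kernel-verified Lean document; each statement's English description precedes it below -/
import Mathlib

section
/- For the full shift T on X = ∏_{n∈ℤ} M over a perfect Polish metric space M, the set {μ ∈ M(T) : R̲(x,y) = 0 for (μ×μ)-a.e. (x,y) ∈ X×X} of invariant measures whose lower quantitative waiting time indicator vanishes (μ×μ)-almost everywhere is a dense Gδ subset of M(T). -/
open Filter MeasureTheory Topology Metric Set
open scoped ENNReal NNReal

noncomputable section
attribute [local instance] Classical.propDecidable

/-- The full (bilateral) shift on the product space `ℤ → M`: `(T x) i = x (i - 1)`. -/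
def fullShift {M : Type*} (x : ℤ → M) : ℤ → M := fun i => x (i - 1)

/-- The metric `d(x,y) = ∑_{n ∈ ℤ} 2^{-|n|} ρ(xₙ,yₙ)/(1 + ρ(xₙ,yₙ))` on `ℤ → M`,
compatible with the product topology. -/
def shiftDist {M : Type*} [MetricSpace M] (x y : ℤ → M) : ℝ :=
  ∑' n : ℤ, (1 / 2 : ℝ) ^ n.natAbs * (dist (x n) (y n) / (1 + dist (x n) (y n)))

/-- Lower local dimension `d̲_μ(x) = liminf_{ε → 0⁺} log μ(B(x,ε)) / log ε` of `μ` at `x`,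
with respect to the distance function `d`; by convention it is `∞` if some ball
centered at `x` has measure zero. -/
def lowerLocalDim {X : Type*} [MeasurableSpace X] (d : X → X → ℝ)
    (μ : Measure X) (x : X) : ℝ≥0∞ :=
  if ∃ ε > 0, μ {y | d x y < ε} = 0 then ⊤
  else liminf (fun ε : ℝ =>
    ENNReal.ofReal (Real.log (μ {y | d x y < ε}).toReal / Real.log ε)) (𝓝[>] (0 : ℝ))

/-- Upper local dimension `d̄_μ(x) = limsup_{ε → 0⁺} log μ(B(x,ε)) / log ε`. -/
def upperLocalDim {X : Type*} [MeasurableSpace X] (d : X → X → ℝ)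
    (μ : Measure X) (x : X) : ℝ≥0∞ :=
  if ∃ ε > 0, μ {y | d x y < ε} = 0 then ⊤
  else limsup (fun ε : ℝ =>
    ENNReal.ofReal (Real.log (μ {y | d x y < ε}).toReal / Real.log ε)) (𝓝[>] (0 : ℝ))

/-- The ratio `log τ_r(x) / (- log r)`, where `τ_r(x) = inf {n ≥ 1 | Tⁿ x ∈ B̄(x,r)}` is the
first return time of `x` to the closed ball `B̄(x,r)`; by convention it is `∞` when the
return time is infinite. -/
def recRatio {X : Type*} (d : X → X → ℝ) (T : X → X) (x : X) (r : ℝ) : ℝ≥0∞ :=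
  if ∃ n : ℕ, 1 ≤ n ∧ d (T^[n] x) x ≤ r then
    ENNReal.ofReal
      (Real.log ((sInf {n : ℕ | 1 ≤ n ∧ d (T^[n] x) x ≤ r} : ℕ) : ℝ) / (- Real.log r))
  else ⊤

/-- Lower recurrence rate `R̲(x) = liminf_{r → 0⁺} log τ_r(x) / (- log r)`. -/
def lowerRecRate {X : Type*} (d : X → X → ℝ) (T : X → X) (x : X) : ℝ≥0∞ :=
  liminf (recRatio d T x) (𝓝[>] (0 : ℝ))

/-- Upper recurrence rate `R̄(x) = limsup_{r → 0⁺} log τ_r(x) / (- log r)`. -/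
def upperRecRate {X : Type*} (d : X → X → ℝ) (T : X → X) (x : X) : ℝ≥0∞ :=
  limsup (recRatio d T x) (𝓝[>] (0 : ℝ))

/-- The ratio `log τ_r(x,y) / (- log r)`, where `τ_r(x,y) = inf {n ≥ 1 | Tⁿ x ∈ B̄(y,r)}` is the
first entrance time of the orbit of `x` into the closed ball `B̄(y,r)`; by convention `∞`
when the entrance time is infinite. -/
def waitRatio {X : Type*} (d : X → X → ℝ) (T : X → X) (x y : X) (r : ℝ) : ℝ≥0∞ :=
  if ∃ n : ℕ, 1 ≤ n ∧ d (T^[n] x) y ≤ r then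
    ENNReal.ofReal
      (Real.log ((sInf {n : ℕ | 1 ≤ n ∧ d (T^[n] x) y ≤ r} : ℕ) : ℝ) / (- Real.log r))
  else ⊤

/-- Lower quantitative waiting time indicator `R̲(x,y)`. -/
def lowerWaitRate {X : Type*} (d : X → X → ℝ) (T : X → X) (x y : X) : ℝ≥0∞ :=
  liminf (waitRatio d T x y) (𝓝[>] (0 : ℝ))

/-- Upper quantitative waiting time indicator `R̄(x,y)`. -/
def upperWaitRate {X : Type*} (d : X → X → ℝ) (T : X → X) (x y : X) : ℝ≥0∞ :=
  limsup (waitRatio d T x y) (𝓝[>] (0 : ℝ))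

/-- The entropy `H(P) = ∑_c -μ(P_c) log μ(P_c)` of the finite measurable partition
`P_c = f ⁻¹ {c}` of `X` induced by a map `f` into a finite set. -/
def partitionEntropy {X F : Type*} [MeasurableSpace X] [Fintype F]
    (μ : Measure X) (f : X → F) : ℝ :=
  ∑ c : F, Real.negMulLog ((μ (f ⁻¹' {c})).toReal)

/-- The Kolmogorov–Sinai (measure-theoretic) entropy `h_μ(T)`: the supremum, over all finite
measurable partitions (coded by measurable maps `f : X → Fin k`), of the limit of
`H(⋁_{i<n} T⁻ⁱ P) / n`. -/
def kolmogorovSinaiEntropy {X : Type*} [MeasurableSpace X] (T : X → X) (μ : Measure X) :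
    ℝ≥0∞ :=
  ⨆ (k : ℕ) (f : X → Fin k) (_ : Measurable f),
    ENNReal.ofReal
      (liminf (fun n : ℕ =>
        partitionEntropy μ (fun x (i : Fin n) => f (T^[(i : ℕ)] x)) / n) atTop)

end

/-!
The lower waiting time indicator of `(x, y)` vanishes iff for every `k` some iterate `Tⁿ x` with
`n ≥ 1` lies within `min (1 / (k + 1)) (1 / n ^ (k + 1))` of `y`, so the pairs with vanishing
indicator form a Gδ set. Since `ν ↦ ν U` is lower semicontinuous for open `U`, giving full measure
to a fixed Gδ set is itself a Gδ condition on a probability measure, here applied to `μ × μ`.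

On a periodic orbit every point hits every other one exactly, so the uniform measure of a periodic
orbit has vanishing indicator, and it remains to approximate an invariant `μ` by such measures. By
the law of large numbers `μ` is close to the empirical measure of some points `x₀, …, x_{L-1}`. As
`μ` is invariant, it is still close to the average of the measures of the orbit segments of length
`N` of the `xᵢ`. Concatenating these segments gives a periodic sequence whose orbit follows each
`xᵢ` for `N` steps. A uniformly continuous function depends up to `ε` on finitely many coordinates,
so its integrals against the two measures differ by at most `ε` plus a boundary term `O(1 / N)`.
-/

section WaitingTime

variable {X : Type*} {d : X → X → ℝ} {T : X → X} {x y : X}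

theorem lt_one_div_pow_iff_log_lt {a r : ℝ} (ha : 0 < a) (hr : 0 < r) {k : ℕ} (hk : 0 < k) :
    r < 1 / a ^ k ↔ Real.log a < 1 / k * -Real.log r := by
  have hk' : (0 : ℝ) < k := Nat.cast_pos.2 hk
  rw [← Real.log_lt_log_iff hr (by positivity), one_div, Real.log_inv, Real.log_pow,
    one_div_mul_eq_div, lt_div_iff₀' hk', lt_neg]

theorem waitRatio_lt_ofReal_iff {r δ : ℝ} (hr₀ : 0 < r) (hr₁ : r < 1) :
    waitRatio d T x y r < ENNReal.ofReal δ ↔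
      ∃ n : ℕ, 1 ≤ n ∧ d (T^[n] x) y ≤ r ∧ Real.log n < δ * -Real.log r := by
  have hlog : 0 < -Real.log r := neg_pos.2 (Real.log_neg hr₀ hr₁)
  rw [waitRatio]
  split_ifs with hit
  · obtain ⟨hτ₁, hτ⟩ := Nat.sInf_mem hit
    rw [ENNReal.ofReal_lt_ofReal_iff_of_nonneg
      (div_nonneg (Real.log_natCast_nonneg _) hlog.le), div_lt_iff₀ hlog]
    refine ⟨fun h => ⟨_, hτ₁, hτ, h⟩, fun ⟨n, hn, hd, h⟩ => lt_of_le_of_lt ?_ h⟩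
    exact Real.log_le_log (Nat.cast_pos.2 hτ₁) (Nat.cast_le.2 (Nat.sInf_le ⟨hn, hd⟩))
  · simp only [not_top_lt, false_iff]
    exact fun ⟨n, hn, hd, _⟩ => hit ⟨n, hn, hd⟩

theorem lowerWaitRate_eq_zero_iff_frequently :
    lowerWaitRate d T x y = 0 ↔
      ∀ δ : ℝ, 0 < δ → ∃ᶠ r in 𝓝[>] (0 : ℝ), waitRatio d T x y r < ENNReal.ofReal δ := by
  rw [lowerWaitRate, ← nonpos_iff_eq_zero, liminf_le_iff]
  refine ⟨fun h δ hδ => h _ (ENNReal.ofReal_pos.2 hδ), fun h c hc => ?_⟩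
  obtain ⟨δ, -, hδ, hδc⟩ := ENNReal.lt_iff_exists_real_btwn.1 hc
  exact (h δ (ENNReal.ofReal_pos.1 hδ)).mono fun r hr => hr.trans hδc

theorem lowerWaitRate_eq_zero_iff :
    lowerWaitRate d T x y = 0 ↔
      ∀ k : ℕ, ∃ n : ℕ, 1 ≤ n ∧
        d (T^[n] x) y < min (1 / ((k + 1 : ℕ) : ℝ)) (1 / (n : ℝ) ^ (k + 1)) := by
  rw [lowerWaitRate_eq_zero_iff_frequently]
  constructor
  · intro h k
    have hk : (0 : ℝ) < 1 / ((k + 1 : ℕ) : ℝ) := by positivity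
    have hk₁ : 1 / ((k + 1 : ℕ) : ℝ) ≤ 1 := by
      simpa using Nat.cast_inv_le_one (α := ℝ) (k + 1)
    obtain ⟨r, hr, hr₀, hrk⟩ := ((h _ hk).and_eventually (Ioo_mem_nhdsGT hk)).exists
    obtain ⟨n, hn, hd, hlog⟩ := (waitRatio_lt_ofReal_iff hr₀ (hrk.trans_le hk₁)).1 hr
    refine ⟨n, hn, hd.trans_lt (lt_min hrk ?_)⟩
    exact (lt_one_div_pow_iff_log_lt (Nat.cast_pos.2 hn) hr₀ k.succ_pos).2 hlog
  · intro h δ hδ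
    refine (nhdsGT_basis (0 : ℝ)).frequently_iff.2 fun ε hε => ?_
    obtain ⟨k, hk⟩ := exists_nat_one_div_lt (lt_min hε (lt_min hδ one_pos))
    simp only [lt_min_iff, ← Nat.cast_add_one] at hk
    obtain ⟨hkε, hkδ, hk₁⟩ := hk
    obtain ⟨n, hn, hd⟩ := h k
    have hn₀ : (0 : ℝ) < n := Nat.cast_pos.2 hn
    obtain ⟨r, hdr, hr⟩ := exists_between (max_lt hd (by positivity))
    rw [max_lt_iff] at hdr
    rw [lt_min_iff] at hr
    have hlog := (lt_one_div_pow_iff_log_lt hn₀ hdr.2 k.succ_pos).1 hr.2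
    refine ⟨r, ⟨hdr.2, hr.1.trans hkε⟩, lt_of_lt_of_le ?_ (ENNReal.ofReal_le_ofReal hkδ.le)⟩
    exact (waitRatio_lt_ofReal_iff hdr.2 (hr.1.trans hk₁)).2 ⟨n, hn, hdr.1.le, hlog⟩

theorem lowerWaitRate_eq_zero_of_iterate_eq (hd : d y y = 0) {n : ℕ} (hn : 1 ≤ n)
    (h : T^[n] x = y) : lowerWaitRate d T x y = 0 := by
  refine lowerWaitRate_eq_zero_iff.2 fun k => ⟨n, hn, ?_⟩
  have : (0 : ℝ) < n := Nat.cast_pos.2 hn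
  rw [h, hd]
  positivity

theorem isGδ_setOfPred_lowerWaitRate_eq_zero [TopologicalSpace X]
    (hd : Continuous fun p : X × X => d p.1 p.2) (hT : Continuous T) :
    IsGδ {p : X × X | lowerWaitRate d T p.1 p.2 = 0} := by
  simp only [lowerWaitRate_eq_zero_iff, ofPred_forall]
  refine IsGδ.iInter_of_isOpen fun k => ?_
  simp only [ofPred_exists]
  refine isOpen_iUnion fun n => isOpen_const.and (isOpen_lt ?_ continuous_const)
  exact hd.comp ((hT.iterate n).prodMap continuous_id)

end WaitingTime

section WeakTopology

variable {Ω : Type*} [MeasurableSpace Ω] [TopologicalSpace Ω] [OpensMeasurableSpace Ω]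
  [HasOuterApproxClosed Ω]

theorem lowerSemicontinuous_probabilityMeasure_apply {U : Set Ω} (hU : IsOpen U) :
    LowerSemicontinuous fun ν : ProbabilityMeasure Ω => (ν : Measure Ω) U :=
  lowerSemicontinuous_iff_le_liminf.2 fun _ =>
    ProbabilityMeasure.le_liminf_measure_open_of_tendsto tendsto_id hU

theorem isGδ_setOfPred_ae_mem_of_isOpen {U : Set Ω} (hU : IsOpen U) :
    IsGδ {ν : ProbabilityMeasure Ω | ∀ᵐ x ∂(ν : Measure Ω), x ∈ U} := by
  obtain ⟨c, -, hc, hc_lim⟩ := exists_seq_strictMono_tendsto' (zero_lt_one (α := ℝ≥0∞))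
  have ae_mem_iff (ν : ProbabilityMeasure Ω) :
      (∀ᵐ x ∂(ν : Measure Ω), x ∈ U) ↔ ∀ j, c j < (ν : Measure Ω) U :=
    (mem_ae_iff_prob_eq_one hU.measurableSet).trans
      ⟨fun h j => h ▸ (hc j).2,
        fun h => prob_le_one.antisymm (le_of_tendsto' hc_lim fun j => (h j).le)⟩
  simp only [ae_mem_iff, ofPred_forall]
  exact IsGδ.iInter_of_isOpen fun j =>
    (lowerSemicontinuous_probabilityMeasure_apply hU).isOpen_preimage (c j)

theorem isGδ_setOfPred_ae_mem {G : Set Ω} (hG : IsGδ G) :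
    IsGδ {ν : ProbabilityMeasure Ω | ∀ᵐ x ∂(ν : Measure Ω), x ∈ G} := by
  obtain ⟨U, hU, rfl⟩ := isGδ_iff_eq_iInter_nat.1 hG
  simp only [mem_iInter, ae_all_iff, ofPred_forall]
  exact IsGδ.iInter fun n => isGδ_setOfPred_ae_mem_of_isOpen (hU n)

theorem isGδ_setOfPred_ae_prod_lowerWaitRate_eq_zero {X : Type*} [TopologicalSpace X]
    [SecondCountableTopology X] [TopologicalSpace.PseudoMetrizableSpace X] [MeasurableSpace X]
    [OpensMeasurableSpace X] {d : X → X → ℝ} (hd : Continuous fun p : X × X => d p.1 p.2)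
    {T : X → X} (hT : Continuous T) :
    IsGδ {ν : ProbabilityMeasure X | ∀ᵐ p ∂((ν : Measure X).prod (ν : Measure X)),
      lowerWaitRate d T p.1 p.2 = 0} :=
  (isGδ_setOfPred_ae_mem (isGδ_setOfPred_lowerWaitRate_eq_zero hd hT)).preimage
    (ProbabilityMeasure.continuous_prod.comp (continuous_id.prodMk continuous_id))

end WeakTopology

section AverageMeasure

variable {X Y E : Type*} [MeasurableSpace X] [NormedAddCommGroup E] [NormedSpace ℝ E] {n : ℕ+}

/-- The uniform average `(ν₀ + ⋯ + νₙ₋₁) / n` of the first `n` terms of a sequence of probability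
measures; `n` is positive so that the average is again a probability measure. -/
noncomputable def averageMeasure (n : ℕ+) (ν : ℕ → ProbabilityMeasure X) : ProbabilityMeasure X :=
  ⟨(n : ℝ≥0∞)⁻¹ • ∑ k ∈ Finset.range n, (ν k : Measure X), ⟨by
    simp [ENNReal.inv_mul_cancel]⟩⟩

theorem integral_averageMeasure {ν : ℕ → ProbabilityMeasure X} {f : X → E}
    (hf : ∀ k, Integrable f (ν k : Measure X)) :
    ∫ x, f x ∂(averageMeasure n ν : Measure X) =
      (n : ℝ)⁻¹ • ∑ k ∈ Finset.range n, ∫ x, f x ∂(ν k : Measure X) := by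
  simp [averageMeasure, integral_smul_measure, integral_finsetSum_measure fun k _ => hf k]

theorem continuous_averageMeasure [TopologicalSpace X] [OpensMeasurableSpace X]
    [TopologicalSpace Y] {ν : Y → ℕ → ProbabilityMeasure X}
    (hν : ∀ k, Continuous fun y => ν y k) : Continuous fun y => averageMeasure n (ν y) := by
  refine continuous_iff_continuousAt.2 fun y =>
    ProbabilityMeasure.tendsto_iff_forall_integral_tendsto.2 fun f => ?_
  simp only [integral_averageMeasure fun _ => f.integrable _]
  refine (tendsto_finsetSum _ fun k _ => ?_).const_smul _
  exact ProbabilityMeasure.tendsto_iff_forall_integral_tendsto.1 ((hν k).tendsto y) f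

theorem averageMeasure_const (ν : ProbabilityMeasure X) : averageMeasure n (fun _ => ν) = ν := by
  apply Subtype.ext
  simp [averageMeasure, ← Nat.cast_smul_eq_nsmul ℝ≥0∞, smul_smul, ENNReal.inv_mul_cancel]

/-- The empirical measure `(δ_{x 0} + ⋯ + δ_{x (n - 1)}) / n`. -/
noncomputable def empiricalMeasure (n : ℕ+) (x : ℕ → X) : ProbabilityMeasure X :=
  averageMeasure n fun k => diracProba (x k)

theorem integral_empiricalMeasure [CompleteSpace E] {x : ℕ → X} {f : X → E}
    (hf : StronglyMeasurable f) :
    ∫ y, f y ∂(empiricalMeasure n x : Measure X) = (n : ℝ)⁻¹ • ∑ k ∈ Finset.range n, f (x k) := by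
  rw [empiricalMeasure, integral_averageMeasure fun k => integrable_dirac' hf enorm_lt_top]
  simp only [diracProba, ProbabilityMeasure.coe_mk, integral_dirac' _ _ hf]

theorem ae_empiricalMeasure_mem_image [MeasurableSingletonClass X] {x : ℕ → X} :
    ∀ᵐ y ∂(empiricalMeasure n x : Measure X), y ∈ x '' Iio (n : ℕ) := by
  refine Measure.ae_smul_measure (ae_finsetSum_measure_iff.2 fun k hk => ?_) _
  simp only [diracProba, ProbabilityMeasure.coe_mk, ae_dirac_eq]
  exact mem_image_of_mem x (Finset.mem_range.1 hk)

theorem map_empiricalMeasure {T : X → Y} [MeasurableSpace Y] (hT : Measurable T) {x : ℕ → X} :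
    (empiricalMeasure n x : Measure X).map T = empiricalMeasure n (T ∘ x) := by
  simp [empiricalMeasure, averageMeasure, diracProba, Measure.map_finset_sum hT.aemeasurable,
    Measure.map_dirac' hT]

end AverageMeasure

section OrbitMeasure

open Function

variable {X : Type*} [MeasurableSpace X] {T : X → X} {n : ℕ+} {x : X}

/-- The empirical measure of the orbit segment `x, T x, …, T^[n - 1] x`. -/
noncomputable def orbitMeasure (T : X → X) (n : ℕ+) (x : X) : ProbabilityMeasure X :=
  empiricalMeasure n fun k => T^[k] x

theorem integral_orbitMeasure {E : Type*} [NormedAddCommGroup E] [NormedSpace ℝ E]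
    [CompleteSpace E] {f : X → E} (hf : StronglyMeasurable f) :
    ∫ y, f y ∂(orbitMeasure T n x : Measure X) = birkhoffAverage ℝ T f n x :=
  integral_empiricalMeasure hf

theorem map_orbitMeasure_of_isPeriodicPt (hT : Measurable T) (hx : IsPeriodicPt T n x) :
    (orbitMeasure T n x : Measure X).map T = orbitMeasure T n x := by
  have sum_shift : ∑ k ∈ Finset.range n, Measure.dirac (T^[k + 1] x) =
      ∑ k ∈ Finset.range n, Measure.dirac (T^[k] x) := by
    obtain ⟨m, hm⟩ := Nat.exists_eq_add_one_of_ne_zero n.ne_zero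
    rw [hm] at hx ⊢
    rw [Finset.sum_range_succ, hx, Finset.sum_range_succ', iterate_zero_apply]
  rw [orbitMeasure, map_empiricalMeasure hT]
  simp only [empiricalMeasure, averageMeasure, diracProba, ProbabilityMeasure.coe_mk,
    comp_apply, ← iterate_succ_apply' T, sum_shift]

theorem ae_prod_orbitMeasure_lowerWaitRate_eq_zero [MeasurableSingletonClass X] {d : X → X → ℝ}
    (hd : ∀ y, d y y = 0) (hx : IsPeriodicPt T n x) :
    ∀ᵐ p ∂((orbitMeasure T n x : Measure X).prod (orbitMeasure T n x : Measure X)),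
      lowerWaitRate d T p.1 p.2 = 0 := by
  have ae_mem_orbit := ae_empiricalMeasure_mem_image (n := n) (x := fun k => T^[k] x)
  filter_upwards [Measure.quasiMeasurePreserving_fst.ae ae_mem_orbit,
    Measure.quasiMeasurePreserving_snd.ae ae_mem_orbit] with p h₁ h₂
  obtain ⟨a, ha, hax⟩ := h₁
  obtain ⟨b, -, hbx⟩ := h₂
  have ha : a < n := ha
  refine lowerWaitRate_eq_zero_of_iterate_eq (hd _) (n := b + (n - a)) (by lia) ?_
  rw [← hax, ← hbx, ← iterate_add_apply, add_assoc, Nat.sub_add_cancel ha.le, iterate_add_apply,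
    hx.eq]

end OrbitMeasure

section EmpiricalApproximation

open ProbabilityTheory BoundedContinuousFunction

variable {X : Type*} [MeasurableSpace X]

theorem exists_seq_tendsto_average_integral {ι E : Type*} [Countable ι] [NormedAddCommGroup E]
    [NormedSpace ℝ E] [CompleteSpace E] (μ : Measure X)
    [IsProbabilityMeasure μ] {g : ι → X → E} (hg : ∀ i, Integrable (g i) μ) :
    ∃ x : ℕ → X, ∀ i, Tendsto (fun n : ℕ => (n : ℝ)⁻¹ • ∑ k ∈ Finset.range n, g i (x k)) atTop
      (𝓝 (∫ y, g i y ∂μ)) := by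
  borelize E
  obtain ⟨Ω, _, P, ξ, -, law_ξ, indep_ξ, _⟩ := exists_iid ℕ μ
  have tendsto_average (i : ι) : ∀ᵐ ω ∂P, Tendsto
      (fun n : ℕ => (n : ℝ)⁻¹ • ∑ k ∈ Finset.range n, g i (ξ k ω)) atTop
      (𝓝 (∫ y, g i y ∂μ)) := by
    have aemeasurable_g (k : ℕ) : AEMeasurable (g i) (P.map (ξ k)) := by
      rw [(law_ξ k).map_eq]
      exact (hg i).aemeasurable
    rw [← (law_ξ 0).integral_comp (hg i).aestronglyMeasurable]
    refine strong_law_ae (fun k => g i ∘ ξ k) ?_ (fun k l hkl => ?_) fun k => ?_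
    · exact ((law_ξ 0).map_eq ▸ hg i : Integrable (g i) (P.map (ξ 0))).comp_aemeasurable
        (law_ξ 0).aemeasurable
    · exact (indep_ξ.indepFun hkl).comp₀ (law_ξ k).aemeasurable (law_ξ l).aemeasurable
        (aemeasurable_g k) (aemeasurable_g l)
    · exact ((law_ξ k).identDistrib (law_ξ 0)).comp_of_aemeasurable (aemeasurable_g k)
  obtain ⟨ω, hω⟩ := (ae_all_iff.2 tendsto_average).exists
  exact ⟨fun k => ξ k ω, hω⟩

variable [TopologicalSpace X] [OpensMeasurableSpace X]

theorem dense_range_empiricalMeasure :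
    Dense (range fun q : ℕ+ × (ℕ → X) => empiricalMeasure q.1 q.2) := by
  intro ν
  choose x hx using fun F : Finset (X →ᵇ ℝ) =>
    exists_seq_tendsto_average_integral (ν : Measure X) (g := fun f : F => f.1)
      fun f => f.1.integrable _
  have : (atTop.curry atTop : Filter (Finset (X →ᵇ ℝ) × ℕ)).NeBot :=
    (frequently_true_iff_neBot _).1 <| (frequently_curry_iff _).2 <|
      Frequently.of_forall fun _ => Frequently.of_forall fun _ => trivial
  refine mem_closure_of_tendsto
    (f := fun q : Finset (X →ᵇ ℝ) × ℕ => empiricalMeasure q.2.succPNat (x q.1))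
    (b := atTop.curry atTop) ?_ (Eventually.of_forall fun q => mem_range_self (q.2.succPNat, x q.1))
  refine ProbabilityMeasure.tendsto_iff_forall_integral_tendsto.2 fun f => ?_
  have tendsto_integral : ∀ᶠ F in atTop, Tendsto
      (fun n : ℕ => ∫ y, f y ∂(empiricalMeasure n.succPNat (x F) : Measure X)) atTop
      (𝓝 (∫ y, f y ∂(ν : Measure X))) := by
    filter_upwards [eventually_ge_atTop {f}] with F hF
    have hf := hx F ⟨f, Finset.singleton_subset_iff.1 hF⟩
    simp only [integral_empiricalMeasure f.continuous.stronglyMeasurable]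
    exact (tendsto_add_atTop_iff_nat 1).2 hf
  exact fun _ hs => tendsto_integral.mono fun _ hF => hF hs

end EmpiricalApproximation

section TimeAverage

open Function

theorem exists_seq_mem_dense_tendsto_apply {X Y : Type*} [TopologicalSpace X] [TopologicalSpace Y]
    [FirstCountableTopology Y] {s : Set X} (hs : Dense s) {Φ : ℕ → X → Y} {x : X} {y : Y}
    (hΦ : ∀ n, ContinuousAt (Φ n) x) (hΦx : ∀ n, Φ n x = y) :
    ∃ u : ℕ → X, (∀ n, u n ∈ s) ∧ Tendsto (fun n => Φ n (u n)) atTop (𝓝 y) := by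
  obtain ⟨V, hV⟩ := (𝓝 y).exists_antitone_basis
  have near (n : ℕ) : ∃ u ∈ s, Φ n u ∈ V n := by
    have hn : ∀ᶠ u in 𝓝 x, Φ n u ∈ V n := hΦ n ((hΦx n).symm ▸ hV.mem n)
    obtain ⟨u, hu, hus⟩ := mem_closure_iff_nhds.1 (hs x) _ hn
    exact ⟨u, hus, hu⟩
  choose u hus hu using near
  exact ⟨u, hus, hV.tendsto hu⟩

variable {X : Type*} [MeasurableSpace X] {T : X → X} {n : ℕ+}

/-- The average `(ν + T_* ν + ⋯ + T_*ⁿ⁻¹ ν) / n` of the first `n` push-forwards of `ν`. -/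
noncomputable def timeAverage (hT : Measurable T) (n : ℕ+) (ν : ProbabilityMeasure X) :
    ProbabilityMeasure X :=
  averageMeasure n fun k => ν.map (hT.iterate k).aemeasurable

theorem timeAverage_of_map_eq (hT : Measurable T) {ν : ProbabilityMeasure X}
    (hν : (ν : Measure X).map T = ν) : timeAverage hT n ν = ν := by
  have map_iterate (k : ℕ) : ν.map (hT.iterate k).aemeasurable = ν :=
    Subtype.ext ((MeasurePreserving.mk hT hν).iterate k).map_eq
  simp only [timeAverage, map_iterate, averageMeasure_const]

theorem timeAverage_empiricalMeasure (hT : Measurable T) {L : ℕ+} {x : ℕ → X} :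
    timeAverage hT n (empiricalMeasure L x) = averageMeasure L fun i => orbitMeasure T n (x i) := by
  refine Subtype.ext ?_
  simp only [timeAverage, averageMeasure, ProbabilityMeasure.toMeasure_map,
    map_empiricalMeasure (hT.iterate _)]
  simp only [orbitMeasure, empiricalMeasure, averageMeasure, ProbabilityMeasure.coe_mk,
    ← Finset.smul_sum, comp_apply]
  rw [Finset.sum_comm, smul_comm]

variable [TopologicalSpace X] [BorelSpace X]

theorem continuous_timeAverage (hT : Continuous T) :
    Continuous (timeAverage hT.measurable n) :=
  continuous_averageMeasure fun k => ProbabilityMeasure.continuous_map (hT.iterate k)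

end TimeAverage

section BirkhoffAverage

theorem birkhoffSum_mul {α A : Type*} [AddCommMonoid A] (T : α → α) (g : α → A) (m n : ℕ) (x : α) :
    birkhoffSum T g (m * n) x = ∑ i ∈ Finset.range n, birkhoffSum T g m (T^[m * i] x) := by
  induction n with
  | zero => simp
  | succ n ih => rw [Nat.mul_succ, birkhoffSum_add, ih, Finset.sum_range_succ]

theorem birkhoffAverage_mul {α A : Type*} (R : Type*) [DivisionSemiring R] [AddCommMonoid A]
    [Module R A] (T : α → α) (g : α → A) (m n : ℕ) (x : α) :
    birkhoffAverage R T g (m * n) x =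
      (n : R)⁻¹ • ∑ i ∈ Finset.range n, birkhoffAverage R T g m (T^[m * i] x) := by
  simp only [birkhoffAverage, birkhoffSum_mul, Nat.cast_mul, mul_inv_rev, ← Finset.smul_sum,
    smul_smul]

theorem dist_average_average_le {E : Type*} [SeminormedAddCommGroup E] [NormedSpace ℝ E] {n : ℕ}
    {a b : ℕ → E} {ε : ℝ} (hε : 0 ≤ ε) (h : ∀ i < n, dist (a i) (b i) ≤ ε) :
    dist ((n : ℝ)⁻¹ • ∑ i ∈ Finset.range n, a i) ((n : ℝ)⁻¹ • ∑ i ∈ Finset.range n, b i) ≤ ε := by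
  have dist_sum_le : dist (∑ i ∈ Finset.range n, a i) (∑ i ∈ Finset.range n, b i) ≤ n * ε := by
    simpa using dist_sum_sum_le_of_le (Finset.range n) fun i hi => h i (Finset.mem_range.1 hi)
  rw [dist_smul₀, Real.norm_of_nonneg (by positivity)]
  exact inv_mul_le_of_le_mul₀ (by positivity) hε dist_sum_le

theorem sum_le_card_mul_add_card_mul {ι : Type*} [DecidableEq ι] {s t : Finset ι} (hts : t ⊆ s)
    {a : ι → ℝ} {ε C : ℝ} (hε : 0 ≤ ε) (ha_ε : ∀ i ∈ s \ t, a i ≤ ε) (ha_C : ∀ i ∈ t, a i ≤ C) :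
    ∑ i ∈ s, a i ≤ s.card * ε + t.card * C := by
  rw [← Finset.sum_sdiff hts]
  refine add_le_add ?_ (by simpa using Finset.sum_le_card_nsmul t a C ha_C)
  calc ∑ i ∈ s \ t, a i ≤ (s \ t).card * ε := by simpa using Finset.sum_le_card_nsmul _ a ε ha_ε
    _ ≤ s.card * ε := by gcongr; exact Finset.sdiff_subset

end BirkhoffAverage

section FullShift

open Function

variable {M : Type*}

theorem fullShift_iterate_apply (n : ℕ) (x : ℤ → M) (i : ℤ) : fullShift^[n] x i = x (i - n) := by
  induction n generalizing x with
  | zero => simp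
  | succ n ih =>
    rw [iterate_succ_apply, ih, fullShift, Nat.cast_succ, sub_sub]

theorem continuous_fullShift [TopologicalSpace M] : Continuous (fullShift (M := M)) :=
  continuous_pi fun i => continuous_apply (i - 1)

theorem shiftDist_self [MetricSpace M] (x : ℤ → M) : shiftDist x x = 0 := by
  simp [shiftDist]

theorem continuous_shiftDist [MetricSpace M] :
    Continuous fun p : (ℤ → M) × (ℤ → M) => shiftDist p.1 p.2 := by
  have summable_weight : Summable fun n : ℤ => (1 / 2 : ℝ) ^ n.natAbs :=
    .of_nat_of_neg (by simpa using summable_geometric_two) (by simpa using summable_geometric_two)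
  refine continuous_tsum (fun n => ?_) summable_weight fun n p => ?_
  · exact continuous_const.mul
      (.div (by fun_prop) (by fun_prop) fun p => (add_pos_of_pos_of_nonneg one_pos dist_nonneg).ne')
  · have : 0 ≤ dist (p.1 n) (p.2 n) := dist_nonneg
    rw [Real.norm_of_nonneg (by positivity)]
    exact mul_le_of_le_one_right (by positivity) (div_le_one_of_le₀ (by linarith) (by positivity))

/-- The periodic sequence whose orbit under the shift runs cyclically through `x 0, …, x (L - 1)`,
following each of them for `N` steps. As `fullShift` moves sequences to the right, the orbit reads
coordinates in decreasing order: the entry at `-(N * i + s)` is `x i (-s)` for `s < N`, `i < L`. -/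
def concatPeriodic (N L : ℕ) (x : ℕ → ℤ → M) : ℤ → M :=
  fun j => x (-j / N % L).toNat (-(-j % N))

theorem isPeriodicPt_concatPeriodic (N L : ℕ) (x : ℕ → ℤ → M) :
    IsPeriodicPt fullShift (N * L) (concatPeriodic N L x) := by
  rcases N.eq_zero_or_pos with rfl | hN
  · simpa using isPeriodicPt_zero _ _
  have hN : (N : ℤ) ≠ 0 := by positivity
  ext j
  have neg_sub_period : -(j - (N * L : ℕ)) = -j + N * L := by push_cast; ring
  rw [fullShift_iterate_apply, concatPeriodic, neg_sub_period, Int.add_mul_ediv_left _ _ hN,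
    Int.add_mul_emod_self_left, Int.add_emod_right]
  rfl

theorem eqOn_fullShift_iterate_concatPeriodic {N L i : ℕ} (x : ℕ → ℤ → M) (hi : i < L) :
    EqOn (fullShift^[N * i] (concatPeriodic N L x)) (x i) (Ioc (-N : ℤ) 0) := by
  intro j hj
  have hj' : 0 ≤ -j ∧ -j < N := ⟨neg_nonneg.2 hj.2, neg_lt.1 hj.1⟩
  have neg_sub_block : -(j - (N * i : ℕ)) = -j + N * i := by push_cast; ring
  rw [fullShift_iterate_apply, concatPeriodic, neg_sub_block,
    Int.add_mul_ediv_left _ _ (by lia), Int.add_mul_emod_self_left, Int.emod_eq_of_lt hj'.1 hj'.2,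
    Int.ediv_eq_zero_of_lt hj'.1 hj'.2, zero_add, neg_neg, Int.emod_eq_of_lt (by lia) (by lia),
    Int.toNat_natCast]

theorem exists_finite_forall_eq_dist_lt {ι E : Type*} {α : ι → Type*} [∀ i, UniformSpace (α i)]
    [PseudoMetricSpace E] {f : (∀ i, α i) → E} (hf : UniformContinuous f) {ε : ℝ} (hε : 0 < ε) :
    ∃ s : Set ι, s.Finite ∧ ∀ y z : ∀ i, α i, (∀ i ∈ s, y i = z i) → dist (f y) (f z) < ε := by
  have hU := hf (dist_mem_uniformity hε)
  rw [Filter.mem_map, Pi.uniformity, mem_iInf] at hU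
  obtain ⟨s, hs, V, hV, hUV⟩ := hU
  refine ⟨s, hs, fun y z hyz => ?_⟩
  suffices h : (y, z) ∈ ⋂ i, V i by rwa [← hUV] at h
  refine mem_iInter.2 fun i => ?_
  obtain ⟨W, hW, hWV⟩ := mem_comap.1 (hV i)
  exact hWV (show (y i, z i) ∈ W from hyz i i.2 ▸ refl_mem_uniformity hW)

theorem exists_nat_forall_eqOn_Icc_dist_lt {E : Type*} [UniformSpace M] [PseudoMetricSpace E]
    {f : (ℤ → M) → E} (hf : UniformContinuous f) {ε : ℝ} (hε : 0 < ε) :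
    ∃ m : ℕ, ∀ y z : ℤ → M, EqOn y z (Icc (-m : ℤ) m) → dist (f y) (f z) < ε := by
  obtain ⟨s, hs, h⟩ := exists_finite_forall_eq_dist_lt hf hε
  obtain ⟨m, hm⟩ := (hs.image Int.natAbs).bddAbove
  refine ⟨m, fun y z hyz => h y z fun i hi => hyz ?_⟩
  have := hm (mem_image_of_mem _ hi)
  exact ⟨by lia, by lia⟩

theorem sum_dist_fullShift_iterate_le {E : Type*} [PseudoMetricSpace E] {f : (ℤ → M) → E}
    {ε C : ℝ} {m N : ℕ} (hε : 0 ≤ ε) (hC : ∀ y z, dist (f y) (f z) ≤ C)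
    (hm : ∀ y z : ℤ → M, EqOn y z (Icc (-m : ℤ) m) → dist (f y) (f z) ≤ ε) (hmN : m ≤ N)
    {y z : ℤ → M} (hyz : EqOn y z (Ioc (-N : ℤ) 0)) :
    ∑ s ∈ Finset.range N, dist (f (fullShift^[s] y)) (f (fullShift^[s] z)) ≤
      N * ε + 2 * m * C := by
  have hC₀ : 0 ≤ C := dist_nonneg.trans (hC y y)
  -- The times at which the window `[-m, m]` sees a coordinate outside of `(-N, 0]`.
  let boundary := Finset.range m ∪ Finset.Ico (N - m) N
  have boundary_subset : boundary ⊆ Finset.range N := by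
    intro s; simp only [boundary, Finset.mem_union, Finset.mem_range, Finset.mem_Ico]; lia
  have card_boundary : (boundary.card : ℝ) ≤ 2 * m := by
    have := Finset.card_union_le (Finset.range m) (Finset.Ico (N - m) N)
    rw [Finset.card_range, Nat.card_Ico, Nat.sub_sub_self hmN, ← two_mul] at this
    exact_mod_cast this
  have eqOn_window : ∀ s ∈ Finset.range N \ boundary,
      EqOn (fullShift^[s] y) (fullShift^[s] z) (Icc (-m : ℤ) m) := by
    intro s hs i hi
    simp only [boundary, Finset.mem_sdiff, Finset.mem_union, Finset.mem_range,
      Finset.mem_Ico] at hs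
    simp only [mem_Icc] at hi
    rw [fullShift_iterate_apply, fullShift_iterate_apply]
    exact hyz ⟨by lia, by lia⟩
  calc ∑ s ∈ Finset.range N, dist (f (fullShift^[s] y)) (f (fullShift^[s] z))
    _ ≤ (Finset.range N).card * ε + boundary.card * C :=
        sum_le_card_mul_add_card_mul boundary_subset hε
          (fun s hs => hm _ _ (eqOn_window s hs)) fun s _ => hC _ _
    _ ≤ N * ε + 2 * m * C := by rw [Finset.card_range]; gcongr

theorem eventually_dist_birkhoffAverage_fullShift_le {E : Type*} [UniformSpace M]
    [NormedAddCommGroup E] [NormedSpace ℝ E] {f : (ℤ → M) → E} {C : ℝ}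
    (hC : ∀ y z, dist (f y) (f z) ≤ C) (hf : UniformContinuous f) {ε : ℝ} (hε : 0 < ε) :
    ∀ᶠ N : ℕ in atTop, ∀ y z : ℤ → M, EqOn y z (Ioc (-N : ℤ) 0) →
      dist (birkhoffAverage ℝ fullShift f N y) (birkhoffAverage ℝ fullShift f N z) ≤ ε := by
  obtain ⟨m, hm⟩ := exists_nat_forall_eqOn_Icc_dist_lt hf (half_pos hε)
  have boundary_le : ∀ᶠ N : ℕ in atTop, 2 * m * C / N ≤ ε / 2 :=
    (tendsto_const_div_atTop_nhds_zero_nat _).eventually_le_const (half_pos hε)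
  filter_upwards [boundary_le, eventually_ge_atTop m, eventually_gt_atTop 0] with
    N hN hmN hN₀ y z hyz
  calc _ ≤ (∑ s ∈ Finset.range N, dist (f (fullShift^[s] y)) (f (fullShift^[s] z))) / N :=
        dist_birkhoffAverage_birkhoffAverage_le ..
    _ ≤ (N * (ε / 2) + 2 * m * C) / N := by
        gcongr
        exact sum_dist_fullShift_iterate_le (half_pos hε).le hC (fun y z h => (hm y z h).le) hmN hyz
    _ = ε / 2 + 2 * m * C / N := by field_simp
    _ ≤ ε := by linarith

theorem eventually_dist_birkhoffAverage_concatPeriodic_le {E : Type*} [UniformSpace M]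
    [NormedAddCommGroup E] [NormedSpace ℝ E] {f : (ℤ → M) → E} {C : ℝ}
    (hC : ∀ y z, dist (f y) (f z) ≤ C) (hf : UniformContinuous f) {ε : ℝ} (hε : 0 < ε) :
    ∀ᶠ N : ℕ in atTop, ∀ (L : ℕ) (x : ℕ → ℤ → M),
      dist (birkhoffAverage ℝ fullShift f (N * L) (concatPeriodic N L x))
        ((L : ℝ)⁻¹ • ∑ i ∈ Finset.range L, birkhoffAverage ℝ fullShift f N (x i)) ≤ ε := by
  filter_upwards [eventually_dist_birkhoffAverage_fullShift_le hC hf hε] with N hN L x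
  rw [birkhoffAverage_mul]
  exact dist_average_average_le hε.le fun i hi =>
    hN _ _ (eqOn_fullShift_iterate_concatPeriodic x hi)

end FullShift

section PeriodicOrbitMeasures

open Function BoundedContinuousFunction
open scoped PiCountable

variable {M : Type*} [MeasurableSpace M]

theorem eventually_dist_integral_orbitMeasure_concatPeriodic_le [UniformSpace M]
    [OpensMeasurableSpace (ℤ → M)] {f : (ℤ → M) →ᵇ ℝ} (hf : UniformContinuous f) {ε : ℝ}
    (hε : 0 < ε) :
    ∀ᶠ n : ℕ in atTop, ∀ (L : ℕ+) (x : ℕ → ℤ → M),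
      dist (∫ y, f y ∂(orbitMeasure fullShift (n.succPNat * L)
          (concatPeriodic n.succPNat L x) : Measure (ℤ → M)))
        (∫ y, f y ∂(averageMeasure L fun i => orbitMeasure fullShift n.succPNat (x i) :
          Measure (ℤ → M))) ≤ ε := by
  have hN := eventually_dist_birkhoffAverage_concatPeriodic_le (fun _ _ => f.dist_le_two_norm _ _)
    hf hε
  filter_upwards [(tendsto_add_atTop_nat 1).eventually hN] with n hn L x
  have f_meas := f.continuous.stronglyMeasurable
  rw [integral_averageMeasure fun _ => f.integrable _]
  simp only [integral_orbitMeasure f_meas]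
  exact hn L x

variable [PseudoMetricSpace M] [SecondCountableTopology M] [BorelSpace M]

theorem tendsto_orbitMeasure_concatPeriodic {L : ℕ → ℕ+} {x : ℕ → ℕ → ℤ → M}
    {μ : ProbabilityMeasure (ℤ → M)}
    (h : Tendsto (fun n => averageMeasure (L n) fun i => orbitMeasure fullShift n.succPNat (x n i))
      atTop (𝓝 μ)) :
    Tendsto (fun n => orbitMeasure fullShift (n.succPNat * L n)
      (concatPeriodic n.succPNat (L n) (x n))) atTop (𝓝 μ) := by
  refine tendsto_iff_forall_lipschitz_integral_tendsto.2 fun f hf_bdd ⟨K, hf_lip⟩ => ?_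
  let F : (ℤ → M) →ᵇ ℝ := ⟨⟨f, hf_lip.continuous⟩, hf_bdd⟩
  refine (ProbabilityMeasure.tendsto_iff_forall_integral_tendsto.1 h F).congr_dist ?_
  refine Metric.tendsto_nhds.2 fun ε hε => ?_
  filter_upwards [eventually_dist_integral_orbitMeasure_concatPeriodic_le (f := F)
    hf_lip.uniformContinuous (half_pos hε)] with n hn
  rw [Real.dist_0_eq_abs, abs_of_nonneg dist_nonneg, dist_comm]
  exact (hn (L n) (x n)).trans_lt (half_lt_self hε)

theorem dense_setOfPred_eq_orbitMeasure_isPeriodicPt :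
    Dense {μ : {ν : ProbabilityMeasure (ℤ → M) // ν.toMeasure.map fullShift = ν.toMeasure} |
      ∃ (n : ℕ+) (p : ℤ → M), IsPeriodicPt fullShift n p ∧ μ.1 = orbitMeasure fullShift n p} := by
  intro μ
  have shift_meas : Measurable (fullShift (M := M)) := continuous_fullShift.measurable
  obtain ⟨u, hu, tendsto_u⟩ := exists_seq_mem_dense_tendsto_apply dense_range_empiricalMeasure
    (fun n : ℕ => (continuous_timeAverage (n := n.succPNat) continuous_fullShift).continuousAt)
    fun n => timeAverage_of_map_eq shift_meas μ.2
  choose q hq using hu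
  simp only [← hq, timeAverage_empiricalMeasure] at tendsto_u
  have periodic (n : ℕ) : IsPeriodicPt fullShift (n.succPNat * (q n).1 : ℕ+)
      (concatPeriodic n.succPNat (q n).1 (q n).2) := isPeriodicPt_concatPeriodic ..
  exact mem_closure_of_tendsto (b := atTop)
    (f := fun n => ⟨_, map_orbitMeasure_of_isPeriodicPt shift_meas (periodic n)⟩)
    (tendsto_subtype_rng.2 (tendsto_orbitMeasure_concatPeriodic tendsto_u))
    (Eventually.of_forall fun n => ⟨_, _, periodic n, rfl⟩)

end PeriodicOrbitMeasures

theorem fullShift_lowerWaitRateZero_denseGδ_general {M : Type*} [MetricSpace M]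
    [TopologicalSpace.SeparableSpace M] [MeasurableSpace M] [BorelSpace M] :
    IsGδ {μ : {ν : ProbabilityMeasure (ℤ → M) // ν.toMeasure.map fullShift = ν.toMeasure} |
        ∀ᵐ p ∂(μ.1.toMeasure.prod μ.1.toMeasure),
          lowerWaitRate shiftDist fullShift p.1 p.2 = 0} ∧
    Dense {μ : {ν : ProbabilityMeasure (ℤ → M) // ν.toMeasure.map fullShift = ν.toMeasure} |
        ∀ᵐ p ∂(μ.1.toMeasure.prod μ.1.toMeasure),
          lowerWaitRate shiftDist fullShift p.1 p.2 = 0} := by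
  have : SecondCountableTopology M := UniformSpace.secondCountable_of_separable M
  constructor
  · exact (isGδ_setOfPred_ae_prod_lowerWaitRate_eq_zero continuous_shiftDist
      continuous_fullShift).preimage continuous_subtype_val
  · refine dense_setOfPred_eq_orbitMeasure_isPeriodicPt.mono ?_
    rintro ⟨_, _⟩ ⟨n, p, hp, rfl⟩
    exact ae_prod_orbitMeasure_lowerWaitRate_eq_zero shiftDist_self hp

/-- For the full shift on `ℤ → M` over a perfect Polish metric space `M`,
the set of invariant measures whose lower quantitative waiting time indicator vanishes
`(μ × μ)`-almost everywhere is a dense `Gδ` subset of `M(T)`. -/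
theorem fullShift_lowerWaitRateZero_denseGδ {M : Type*} [MetricSpace M] [CompleteSpace M]
    [TopologicalSpace.SeparableSpace M] [PerfectSpace M]
    [MeasurableSpace M] [BorelSpace M] :
    IsGδ {μ : {ν : ProbabilityMeasure (ℤ → M) // ν.toMeasure.map fullShift = ν.toMeasure} |
        ∀ᵐ p ∂(μ.1.toMeasure.prod μ.1.toMeasure),
          lowerWaitRate shiftDist fullShift p.1 p.2 = 0} ∧
    Dense {μ : {ν : ProbabilityMeasure (ℤ → M) // ν.toMeasure.map fullShift = ν.toMeasure} |
        ∀ᵐ p ∂(μ.1.toMeasure.prod μ.1.toMeasure),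
          lowerWaitRate shiftDist fullShift p.1 p.2 = 0} :=
  fullShift_lowerWaitRateZero_denseGδ_general
end

section
/- Let X be a Polish metric space, let T : X → X be a bijection such that T is Lipschitz with constant Λ > 1 and T⁻¹ is Lipschitz, and let μ be an ergodic T-invariant Borel probability measure. Then d̄_μ(x) ≥ h_μ(T)/log Λ for μ-a.e. x ∈ X; equivalently, the lower packing dimension of μ satisfies dim_P^-(μ) ≥ h_μ(T)/log Λ. -/
open Filter MeasureTheory Topology Metric Set
open scoped ENNReal NNReal

noncomputable section
attribute [local instance] Classical.propDecidable

end

/-!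
Fix `s` and call a point heavy if, up to a constant, its balls of radius `Λ⁻ⁿ` have mass at least
`e^{-ns}` for all `n`. Since `T` expands distances by at most `Λ`, the heavy points form a forward
invariant set, so by ergodicity they are null or conull; points of upper local dimension less than
`s / log Λ` are heavy. If almost every point is heavy, disjointness of balls shows that about
`e^{ns}` balls of radius comparable to `Λ⁻ⁿ` cover most of `X`. Along `n` iterates such a ball stays
so small that all its points share the same name with respect to a given finite partition, except
at the times spent in a set of small measure around the boundaries of the partition. So the names
of length `n` lie, on average, close in Hamming distance to a codebook of about `e^{ns}` words, and
comparing their law with a law concentrated near the codebook (Gibbs' inequality) bounds the entropy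
by `s`.
-/

section BallMass

variable {X : Type*} [PseudoMetricSpace X] [MeasurableSpace X]

lemma lowerSemicontinuous_measure_ball (μ : Measure X) (r : ℝ) :
    LowerSemicontinuous fun x => μ (ball x r) := by
  intro x a (ha : a < μ (ball x r))
  obtain ⟨u, hu_mono, hu_lt, hu⟩ := exists_seq_strictMono_tendsto r
  have ball_eq : ball x r = ⋃ n, ball x (u n) := by
    refine Subset.antisymm (fun y hy => ?_) (iUnion_subset fun n => ball_subset_ball (hu_lt n).le)
    exact mem_iUnion.2 (hu.eventually (lt_mem_nhds (mem_ball.1 hy))).exists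
  have ball_mono : Monotone fun n => ball x (u n) := fun m n hmn =>
    ball_subset_ball (hu_mono.monotone hmn)
  rw [ball_eq, ball_mono.measure_iUnion] at ha
  obtain ⟨n, hn⟩ := lt_iSup_iff.1 ha
  filter_upwards [ball_mem_nhds x (sub_pos.2 (hu_lt n))] with y hy
  refine hn.trans_le (measure_mono (ball_subset_ball' ?_))
  rw [dist_comm]
  linarith [mem_ball.1 hy]

lemma encard_mul_le_measure_univ_of_isSeparated [OpensMeasurableSpace X] {μ : Measure X}
    {C : Set X} {r : ℝ≥0} {a : ℝ≥0∞} (hC : IsSeparated (2 * r) C)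
    (h : ∀ x ∈ C, a ≤ μ (ball x r)) : (C.encard : ℝ≥0∞) * a ≤ μ univ := by
  have disjoint_balls : Pairwise (Function.onFun Disjoint fun x : C => ball (x : X) r) := by
    intro x y hxy
    refine ball_disjoint_ball ?_
    have hlt : (2 * r : ℝ≥0∞) < edist (x : X) y := hC x.2 y.2 (Subtype.coe_ne_coe.2 hxy)
    rw [edist_nndist] at hlt
    have hlt' : 2 * r < nndist (x : X) y := by exact_mod_cast hlt
    rw [← two_mul]
    exact_mod_cast hlt'.le
  calc (C.encard : ℝ≥0∞) * a = ∑' _ : C, a := (ENNReal.tsum_set_const C a).symm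
    _ ≤ ∑' x : C, μ (ball (x : X) r) := ENNReal.tsum_le_tsum fun x => h x x.2
    _ ≤ μ (⋃ x : C, ball (x : X) r) :=
      tsum_meas_le_meas_iUnion_of_disjoint μ (fun _ => measurableSet_ball) disjoint_balls
    _ ≤ μ univ := measure_mono (subset_univ _)

lemma coveringNumber_mul_le_measure_univ [OpensMeasurableSpace X] {μ : Measure X} {A : Set X}
    {r : ℝ≥0} {a : ℝ≥0∞} (h : ∀ x ∈ A, a ≤ μ (ball x r)) :
    (coveringNumber (2 * r) A : ℝ≥0∞) * a ≤ μ univ := by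
  have packing_le : (packingNumber (2 * r) A : ℝ≥0∞) * a ≤ μ univ := by
    simp only [packingNumber, ENat.toENNReal_iSup, ENNReal.iSup_mul, iSup_le_iff]
    intro C hCA hC
    exact encard_mul_le_measure_univ_of_isSeparated (by simpa using hC) fun x hx => h x (hCA hx)
  refine le_trans ?_ packing_le
  gcongr
  exact coveringNumber_le_packingNumber _ _

end BallMass

section SmallExceptionalSet

variable {X : Type*} [PseudoMetricSpace X] [MeasurableSpace X] [BorelSpace X]
  (μ : Measure X) [IsFiniteMeasure μ]

lemma exists_measurableSet_lt_eventually_uniformity_mem_of_mem {s : Set X} (hs : MeasurableSet s)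
    {ε : ℝ≥0∞} (hε : ε ≠ 0) :
    ∃ B, MeasurableSet B ∧ μ B < ε ∧
      ∀ᶠ p : X × X in uniformity X, p.1 ∉ B → p.2 ∉ B → p.1 ∈ s → p.2 ∈ s := by
  have hε2 : ε / 2 ≠ 0 := (ENNReal.half_pos hε).ne'
  obtain ⟨F, hFs, hF, hsF⟩ := hs.exists_isClosed_sdiff_lt (measure_ne_top μ s) hε2
  obtain ⟨ρ, hρF, hρ⟩ : ∃ ρ, μ (thickening ρ F) < μ F + ε / 2 ∧ 0 < ρ :=
    (((tendsto_measure_thickening_of_isClosed ⟨1, one_pos, measure_ne_top _ _⟩ hF).eventually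
      (gt_mem_nhds (ENNReal.lt_add_right (measure_ne_top _ _) hε2))).and
        self_mem_nhdsWithin).exists
  have hFρ : μ (thickening ρ F \ F) < ε / 2 :=
    measure_sdiff_lt_of_lt_add hF.measurableSet.nullMeasurableSet
      (self_subset_thickening hρ F) (measure_ne_top _ _) hρF
  refine ⟨(s \ F) ∪ (thickening ρ F \ F), (hs.diff hF.measurableSet).union
    (isOpen_thickening.measurableSet.diff hF.measurableSet), ?_, ?_⟩
  · calc μ ((s \ F) ∪ (thickening ρ F \ F)) ≤ μ (s \ F) + μ (thickening ρ F \ F) :=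
          measure_union_le _ _
      _ < ε / 2 + ε / 2 := ENNReal.add_lt_add hsF hFρ
      _ = ε := ENNReal.add_halves ε
  · filter_upwards [dist_mem_uniformity hρ] with ⟨x, y⟩ hxy hx hy hxs
    have hxF : x ∈ F := by
      by_contra hxF
      exact hx (Or.inl ⟨hxs, hxF⟩)
    have hyρ : y ∈ thickening ρ F := mem_thickening_iff.2 ⟨x, hxF, by rw [dist_comm]; exact hxy⟩
    by_contra hys
    exact hy (Or.inr ⟨hyρ, fun hyF => hys (hFs hyF)⟩)

lemma exists_measurableSet_lt_eventually_uniformity_eq {α : Type*} [Finite α] [MeasurableSpace α]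
    [MeasurableSingletonClass α] {f : X → α} (hf : Measurable f) {ε : ℝ≥0∞} (hε : ε ≠ 0) :
    ∃ B, MeasurableSet B ∧ μ B < ε ∧
      ∀ᶠ p : X × X in uniformity X, p.1 ∉ B → p.2 ∉ B → f p.1 = f p.2 := by
  obtain ⟨η, hη, hηε⟩ := ENNReal.exists_pos_sum_of_countable' hε α
  choose B hB hBη hB_unif using fun a =>
    exists_measurableSet_lt_eventually_uniformity_mem_of_mem μ (hf (measurableSet_singleton a))
      (hη a).ne'
  refine ⟨⋃ a, B a, MeasurableSet.iUnion hB, ?_, ?_⟩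
  · calc μ (⋃ a, B a) ≤ ∑' a, μ (B a) := measure_iUnion_le B
      _ ≤ ∑' a, η a := ENNReal.tsum_le_tsum fun a => (hBη a).le
      _ < ε := hηε
  · filter_upwards [eventually_all.2 hB_unif] with p hp h₁ h₂
    have hmem := hp (f p.1) (fun h => h₁ (mem_iUnion_of_mem _ h))
      (fun h => h₂ (mem_iUnion_of_mem _ h)) rfl
    exact (mem_singleton_iff.1 hmem).symm

end SmallExceptionalSet

section Entropy

lemma sum_negMulLog_le_sum_mul_neg_log {F : Type*} [Fintype F] {p q : F → ℝ} (hp : ∀ a, 0 ≤ p a)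
    (hq : ∀ a, 0 < q a) (hqp : ∑ a, q a ≤ ∑ a, p a) :
    ∑ a, Real.negMulLog (p a) ≤ ∑ a, p a * -Real.log (q a) := by
  have pointwise : ∀ a, Real.negMulLog (p a) ≤ p a * -Real.log (q a) + (q a - p a) := by
    intro a
    rcases (hp a).eq_or_lt with h0 | h0
    · simp [← h0, (hq a).le]
    · have hlog := Real.log_le_sub_one_of_pos (div_pos (hq a) h0)
      rw [Real.log_div (hq a).ne' h0.ne', le_sub_iff_add_le, le_div_iff₀ h0] at hlog
      rw [Real.negMulLog]
      linarith
  calc ∑ a, Real.negMulLog (p a) ≤ ∑ a, (p a * -Real.log (q a) + (q a - p a)) :=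
        Finset.sum_le_sum fun a _ => pointwise a
    _ = ∑ a, p a * -Real.log (q a) + (∑ a, q a - ∑ a, p a) := by
        rw [Finset.sum_add_distrib, Finset.sum_sub_distrib]
    _ ≤ ∑ a, p a * -Real.log (q a) := by linarith

lemma partitionEntropy_nonneg {X F : Type*} [MeasurableSpace X] [Fintype F] (μ : Measure X)
    [IsZeroOrProbabilityMeasure μ] (f : X → F) : 0 ≤ partitionEntropy μ f :=
  Finset.sum_nonneg fun _ _ => Real.negMulLog_nonneg measureReal_nonneg measureReal_le_one

variable {X : Type*} [MeasurableSpace X] {μ : Measure X} [IsProbabilityMeasure μ]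

lemma partitionEntropy_le_integral_neg_log {F : Type*} [Fintype F] [MeasurableSpace F]
    [MeasurableSingletonClass F] {f : X → F} (hf : Measurable f) {q : F → ℝ}
    (hq : ∀ a, 0 < q a) (hq_sum : ∑ a, q a ≤ 1) :
    partitionEntropy μ f ≤ ∫ x, -Real.log (q (f x)) ∂μ := by
  have : IsProbabilityMeasure (μ.map f) := Measure.isProbabilityMeasure_map hf.aemeasurable
  have law : ∀ a, (μ (f ⁻¹' {a})).toReal = (μ.map f).real {a} := fun a => by
    rw [Measure.real, Measure.map_apply hf (measurableSet_singleton a)]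
  have integral_eq : ∫ x, -Real.log (q (f x)) ∂μ = ∑ a, (μ.map f).real {a} * -Real.log (q a) := by
    rw [← integral_map (f := fun a => -Real.log (q a)) hf.aemeasurable
      Measurable.of_discrete.aestronglyMeasurable, integral_fintype Integrable.of_finite]
    rfl
  simp only [partitionEntropy, law, integral_eq]
  refine sum_negMulLog_le_sum_mul_neg_log (fun _ => measureReal_nonneg) hq ?_
  simpa [sum_measureReal_singleton] using hq_sum

variable {ι α : Type*} [Fintype ι] [Fintype α] [DecidableEq α]

lemma sum_exp_neg_mul_hammingDist_le [DecidableEq ι] (β : ℝ) (w : ι → α) :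
    ∑ a, Real.exp (-(β * hammingDist a w)) ≤
      Real.exp (Fintype.card ι * (Fintype.card α * Real.exp (-β))) := by
  have exp_eq_prod (a : ι → α) : Real.exp (-(β * hammingDist a w)) =
      ∏ i, if a i = w i then 1 else Real.exp (-β) := by
    rw [Finset.prod_ite, Finset.prod_const_one, one_mul, Finset.prod_const, ← Real.exp_nat_mul]
    congr 1
    simp only [hammingDist, ne_eq]
    ring
  have sum_letter_le (i : ι) : ∑ b, (if b = w i then 1 else Real.exp (-β)) ≤
      Real.exp (Fintype.card α * Real.exp (-β)) :=
    calc ∑ b, (if b = w i then 1 else Real.exp (-β))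
        ≤ ∑ b, ((if b = w i then 1 else 0) + Real.exp (-β)) :=
          Finset.sum_le_sum fun b _ => by split_ifs <;> simp [Real.exp_nonneg]
      _ = Fintype.card α * Real.exp (-β) + 1 := by
          simp [Finset.sum_add_distrib, add_comm]
      _ ≤ Real.exp (Fintype.card α * Real.exp (-β)) := Real.add_one_le_exp _
  calc ∑ a, Real.exp (-(β * hammingDist a w))
      = ∏ i, ∑ b, (if b = w i then 1 else Real.exp (-β)) := by
        simp only [exp_eq_prod, Fintype.prod_sum]
    _ ≤ ∏ _i : ι, Real.exp (Fintype.card α * Real.exp (-β)) :=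
        Finset.prod_le_prod (fun i _ => Finset.sum_nonneg fun b _ => by positivity)
          fun i _ => sum_letter_le i
    _ = Real.exp (Fintype.card ι * (Fintype.card α * Real.exp (-β))) := by
        rw [Finset.prod_const, ← Real.exp_nat_mul, Finset.card_univ]

lemma partitionEntropy_le_of_hammingDist_le [DecidableEq ι] [MeasurableSpace α]
    [MeasurableSingletonClass α] {g : X → ι → α} (hg : Measurable g) {C : Finset (ι → α)}
    (hC : C.Nonempty) {D : X → ℝ} (hD : Integrable D μ)
    (h : ∀ x, ∃ w ∈ C, hammingDist (g x) w ≤ D x) {β : ℝ} (hβ : 0 ≤ β) :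
    partitionEntropy μ g ≤
      Real.log C.card + Fintype.card ι * (Fintype.card α * Real.exp (-β)) + β * ∫ x, D x ∂μ := by
  set κ := Real.log C.card + Fintype.card ι * (Fintype.card α * Real.exp (-β)) with hκ
  -- `q` mixes the product laws proportional to `exp (-β d(·, w))`, `w ∈ C`, where `d` is the
  -- Hamming distance; `κ` bounds the log of the normalizing constant.
  let q : (ι → α) → ℝ := fun a => ∑ w ∈ C, Real.exp (-(κ + β * hammingDist a w))
  have q_pos (a) : 0 < q a := Finset.sum_pos (fun _ _ => Real.exp_pos _) hC
  have sum_q_le : ∑ a, q a ≤ 1 := by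
    have card_pos : (0 : ℝ) < C.card := by exact_mod_cast hC.card_pos
    calc ∑ a, q a = ∑ w ∈ C, Real.exp (-κ) * ∑ a, Real.exp (-(β * hammingDist a w)) := by
          rw [Finset.sum_comm]
          simp only [neg_add, Real.exp_add, Finset.mul_sum]
      _ ≤ ∑ _w ∈ C, Real.exp (-κ) * Real.exp (Fintype.card ι * (Fintype.card α * Real.exp (-β))) :=
          Finset.sum_le_sum fun w _ => by gcongr; exact sum_exp_neg_mul_hammingDist_le β w
      _ = ∑ _w ∈ C, (C.card : ℝ)⁻¹ := by
          rw [← Real.exp_add, hκ, neg_add, neg_add_cancel_right, Real.exp_neg,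
            Real.exp_log card_pos]
      _ = 1 := by rw [Finset.sum_const, nsmul_eq_mul, mul_inv_cancel₀ card_pos.ne']
  have neg_log_q_le (x) : -Real.log (q (g x)) ≤ κ + β * D x := by
    obtain ⟨w, hw, hwD⟩ := h x
    rw [neg_le, Real.le_log_iff_exp_le (q_pos _)]
    calc Real.exp (-(κ + β * D x)) ≤ Real.exp (-(κ + β * hammingDist (g x) w)) := by gcongr
      _ ≤ q (g x) := Finset.single_le_sum
        (f := fun w => Real.exp (-(κ + β * hammingDist (g x) w))) (fun _ _ => Real.exp_nonneg _) hw
  have integrable_log : Integrable (fun x => -Real.log (q (g x))) μ := by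
    have : Integrable (fun a => -Real.log (q a)) (μ.map g) := Integrable.of_finite
    exact this.comp_measurable hg
  calc partitionEntropy μ g ≤ ∫ x, -Real.log (q (g x)) ∂μ :=
        partitionEntropy_le_integral_neg_log hg q_pos sum_q_le
    _ ≤ ∫ x, (κ + β * D x) ∂μ :=
        integral_mono integrable_log ((integrable_const κ).add (hD.const_mul β)) neg_log_q_le
    _ = κ + β * ∫ x, D x ∂μ := by
        rw [integral_add (integrable_const κ) (hD.const_mul β), integral_const_mul]
        simp

end Entropy

section Itinerary

/-- The `(T, f)`-name of length `n` of `x`: the letters `f x, f (T x), …, f (T^[n - 1] x)`. Its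
level sets are the atoms of the `n`-th refinement of the partition coded by `f`. -/
def itinerary {X α : Type*} (T : X → X) (f : X → α) (n : ℕ) (x : X) : Fin n → α :=
  fun i => f (T^[i] x)

variable {X α : Type*} {T : X → X} {f : X → α}

lemma measurable_itinerary [MeasurableSpace X] [MeasurableSpace α] (hT : Measurable T)
    (hf : Measurable f) (n : ℕ) : Measurable (itinerary T f n) :=
  measurable_pi_lambda _ fun i => hf.comp (hT.iterate i)

lemma hammingDist_itinerary_le_sum_indicator [DecidableEq α] {B : Set X} {n : ℕ} {x : X}
    {w : Fin n → α} (h : ∀ i : Fin n, T^[i] x ∉ B → itinerary T f n x i = w i) :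
    (hammingDist (itinerary T f n x) w : ℝ) ≤ ∑ i : Fin n, (T^[i] ⁻¹' B).indicator 1 x := by
  classical
  rw [hammingDist, Finset.card_filter, Nat.cast_sum]
  refine Finset.sum_le_sum fun i _ => ?_
  by_cases hi : T^[i] x ∈ B
  · rw [indicator_of_mem (mem_preimage.2 hi)]
    split_ifs <;> simp
  · simp [h i hi, hi]

lemma integral_sum_indicator_preimage_iterate [MeasurableSpace X] {μ : Measure X}
    [IsFiniteMeasure μ] (hT : MeasurePreserving T μ μ) {B : Set X} (hB : MeasurableSet B) (n : ℕ) :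
    ∫ x, ∑ i : Fin n, (T^[i] ⁻¹' B).indicator (1 : X → ℝ) x ∂μ = n * μ.real B := by
  have integral_eq (i : Fin n) : ∫ x, (T^[i] ⁻¹' B).indicator (1 : X → ℝ) x ∂μ = μ.real B := by
    rw [integral_indicator_one (hT.measurable.iterate i hB),
      (hT.iterate i).measureReal_preimage hB.nullMeasurableSet]
  calc ∫ x, ∑ i : Fin n, (T^[i] ⁻¹' B).indicator (1 : X → ℝ) x ∂μ
      = ∑ i : Fin n, ∫ x, (T^[i] ⁻¹' B).indicator (1 : X → ℝ) x ∂μ :=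
        integral_finsetSum Finset.univ fun i _ =>
          (integrable_const 1).indicator (hT.measurable.iterate i hB)
    _ = n * μ.real B := by simp only [integral_eq, Finset.sum_const, Finset.card_univ,
        Fintype.card_fin, nsmul_eq_mul]

lemma partitionEntropy_itinerary_le [MeasurableSpace X] {μ : Measure X} [IsProbabilityMeasure μ]
    [Fintype α] [MeasurableSpace α] [MeasurableSingletonClass α] (hT : MeasurePreserving T μ μ)
    (hf : Measurable f) {A B : Set X} (hA : MeasurableSet A) (hB : MeasurableSet B) {n : ℕ}
    {C : Finset (Fin n → α)} (hC : C.Nonempty)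
    (h : ∀ x ∈ A, ∃ w ∈ C, ∀ i : Fin n, T^[i] x ∉ B → itinerary T f n x i = w i)
    {β : ℝ} (hβ : 0 ≤ β) :
    partitionEntropy μ (itinerary T f n) ≤ Real.log C.card +
      n * (Fintype.card α * Real.exp (-β) + β * (μ.real B + μ.real Aᶜ)) := by
  classical
  let visits : X → ℝ := fun x => ∑ i : Fin n, (T^[i] ⁻¹' B).indicator 1 x
  let D : X → ℝ := fun x => visits x + Aᶜ.indicator (fun _ => (n : ℝ)) x
  have integrable_visits : Integrable visits μ := integrable_finsetSum _ fun i _ =>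
    (integrable_const 1).indicator (hT.measurable.iterate i hB)
  have integrable_indicator : Integrable (Aᶜ.indicator fun _ => (n : ℝ)) μ :=
    (integrable_const _).indicator hA.compl
  have integral_D : ∫ x, D x ∂μ = n * (μ.real B + μ.real Aᶜ) := by
    rw [integral_add integrable_visits integrable_indicator,
      integral_sum_indicator_preimage_iterate hT hB, integral_indicator_const _ hA.compl,
      smul_eq_mul]
    ring
  have exists_close (x) : ∃ w ∈ C, hammingDist (itinerary T f n x) w ≤ D x := by
    by_cases hx : x ∈ A
    · obtain ⟨w, hw, hwx⟩ := h x hx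
      exact ⟨w, hw, by simpa [D, hx] using hammingDist_itinerary_le_sum_indicator hwx⟩
    · obtain ⟨w, hw⟩ := hC
      have visits_nonneg : 0 ≤ visits x :=
        Finset.sum_nonneg fun i _ => indicator_nonneg (fun _ _ => zero_le_one) x
      have dist_le : (hammingDist (itinerary T f n x) w : ℝ) ≤ n := by
        exact_mod_cast hammingDist_le_card_fintype.trans_eq (Fintype.card_fin n)
      exact ⟨w, hw, by simpa [D, hx] using dist_le.trans (le_add_of_nonneg_left visits_nonneg)⟩
  calc partitionEntropy μ (itinerary T f n)
      ≤ Real.log C.card + Fintype.card (Fin n) * (Fintype.card α * Real.exp (-β)) +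
          β * ∫ x, D x ∂μ :=
        partitionEntropy_le_of_hammingDist_le (measurable_itinerary hT.measurable hf n) hC
          (integrable_visits.add integrable_indicator) exists_close hβ
    _ = _ := by rw [integral_D, Fintype.card_fin]; ring

variable [PseudoMetricSpace X] {Λ : ℝ≥0}

lemma exists_codeword_of_dist_lt [Nonempty α] (hΛ : 1 ≤ Λ) (hT : LipschitzWith Λ T) {B U : Set X}
    {ρ : ℝ} (hB : ∀ x ∉ B, ∀ y ∉ B, dist x y < ρ → f x = f y) {n : ℕ}
    (hU : ∀ x ∈ U, ∀ y ∈ U, Λ ^ n * dist x y < ρ) :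
    ∃ w : Fin n → α, ∀ x ∈ U, ∀ i : Fin n, T^[i] x ∉ B → itinerary T f n x i = w i := by
  have exists_letter (i : Fin n) : ∃ a, ∀ x ∈ U, T^[i] x ∉ B → f (T^[i] x) = a := by
    by_cases hi : ∃ y ∈ U, T^[i] y ∉ B
    · obtain ⟨y, hyU, hyB⟩ := hi
      refine ⟨f (T^[i] y), fun x hxU hxB => hB _ hxB _ hyB ?_⟩
      calc dist (T^[i] x) (T^[i] y) ≤ (Λ ^ (i : ℕ) : ℝ≥0) * dist x y :=
            (hT.iterate i).dist_le_mul x y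
        _ ≤ (Λ ^ n : ℝ≥0) * dist x y := by gcongr; exact i.2.le
        _ < ρ := by exact_mod_cast hU x hxU y hyU
    · push Not at hi
      exact ⟨Classical.arbitrary α, fun x hxU hxB => absurd (hi x hxU) hxB⟩
  choose w hw using exists_letter
  exact ⟨w, fun x hx i => hw i x hx⟩

lemma exists_codebook_of_isCover [Nonempty α] (hΛ : 1 ≤ Λ) (hT : LipschitzWith Λ T)
    {A B : Set X} {ρ : ℝ} (hB : ∀ x ∉ B, ∀ y ∉ B, dist x y < ρ → f x = f y) {n : ℕ} {r : ℝ≥0}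
    {F : Finset X} (hF : IsCover r A F) (hr : Λ ^ n * (2 * r) < ρ) :
    ∃ C : Finset (Fin n → α), C.card ≤ F.card ∧
      ∀ x ∈ A, ∃ w ∈ C, ∀ i : Fin n, T^[i] x ∉ B → itinerary T f n x i = w i := by
  classical
  choose w hw using fun z => exists_codeword_of_dist_lt (U := closedBall z r) hΛ hT hB
    (n := n) fun x hx y hy => lt_of_le_of_lt (by
      gcongr
      linarith [dist_triangle_right x y z, mem_closedBall.1 hx, mem_closedBall.1 hy]) hr
  refine ⟨F.image w, Finset.card_image_le, fun x hx => ?_⟩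
  obtain ⟨z, hzF, hxz⟩ := mem_iUnion₂.1 (isCover_iff_subset_iUnion_closedBall.1 hF hx)
  exact ⟨w z, Finset.mem_image_of_mem w hzF, hw z x hxz⟩

end Itinerary

section HeavyPoints

variable {X : Type*} [PseudoMetricSpace X] [MeasurableSpace X] {μ : Measure X} {Λ : ℝ≥0} {s : ℝ}

/-- The points around which the mass of balls decays at rate at most `s` along the geometric
sequence of radii `Λ⁻ⁿ`, with constant `M`: `μ (B(x, Λ⁻ⁿ)) ≥ M⁻¹ e^{-ns}` for all `n`. The
constant is a natural number so that the union over all constants is countable. -/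
def heavyPoints (μ : Measure X) (Λ : ℝ≥0) (s : ℝ) (M : ℕ) : Set X :=
  {x | ∀ n : ℕ, Real.exp (-(n * s)) ≤ M * μ.real (ball x (Λ ^ n)⁻¹)}

lemma monotone_heavyPoints : Monotone (heavyPoints μ Λ s) := by
  intro M M' hM x hx n
  exact (hx n).trans (by gcongr)

lemma measurableSet_heavyPoints [OpensMeasurableSpace X] (M : ℕ) :
    MeasurableSet (heavyPoints μ Λ s M) := by
  rw [heavyPoints, ofPred_forall]
  exact MeasurableSet.iInter fun n => measurableSet_le measurable_const
    ((lowerSemicontinuous_measure_ball μ _).measurable.ennreal_toReal.const_mul _)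

variable [IsFiniteMeasure μ]

lemma iUnion_heavyPoints_subset_preimage [OpensMeasurableSpace X] {T : X → X} (hΛ : 0 < Λ)
    (hT : LipschitzWith Λ T) (hμ : MeasurePreserving T μ μ) :
    ⋃ M, heavyPoints μ Λ s M ⊆ T ⁻¹' ⋃ M, heavyPoints μ Λ s M := by
  intro x hx
  obtain ⟨M, hM⟩ := mem_iUnion.1 hx
  obtain ⟨M', hM'⟩ := exists_nat_ge (Real.exp s * M)
  refine mem_iUnion.2 ⟨M', fun n => ?_⟩
  have ball_subset : ball x (Λ ^ (n + 1))⁻¹ ⊆ T ⁻¹' ball (T x) (Λ ^ n)⁻¹ := by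
    intro y hy
    calc dist (T y) (T x) ≤ Λ * dist y x := hT.dist_le_mul y x
      _ < Λ * ((Λ : ℝ) ^ (n + 1))⁻¹ := by gcongr; exact mem_ball.1 hy
      _ = ((Λ : ℝ) ^ n)⁻¹ := by
          have : (Λ : ℝ) ≠ 0 := by exact_mod_cast hΛ.ne'
          field_simp
          ring
  have mass_le : μ.real (ball x (Λ ^ (n + 1))⁻¹) ≤ μ.real (ball (T x) (Λ ^ n)⁻¹) := by
    exact (measureReal_mono ball_subset).trans_eq
      (hμ.measureReal_preimage measurableSet_ball.nullMeasurableSet)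
  calc Real.exp (-(n * s)) = Real.exp s * Real.exp (-((n + 1 : ℕ) * s)) := by
        rw [← Real.exp_add]
        push_cast
        ring_nf
    _ ≤ Real.exp s * (M * μ.real (ball x (Λ ^ (n + 1))⁻¹)) := by gcongr; exact hM (n + 1)
    _ ≤ Real.exp s * (M * μ.real (ball (T x) (Λ ^ n)⁻¹)) := by gcongr
    _ = Real.exp s * M * μ.real (ball (T x) (Λ ^ n)⁻¹) := by ring
    _ ≤ M' * μ.real (ball (T x) (Λ ^ n)⁻¹) := by gcongr

lemma tendsto_measureReal_compl_heavyPoints [OpensMeasurableSpace X]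
    (h : ∀ᵐ x ∂μ, x ∈ ⋃ M, heavyPoints μ Λ s M) :
    Tendsto (fun M => μ.real (heavyPoints μ Λ s M)ᶜ) atTop (𝓝 0) := by
  have tendsto_measure : Tendsto (fun M => μ (heavyPoints μ Λ s M)ᶜ) atTop (𝓝 0) := by
    have hlim := tendsto_measure_iInter_atTop
      (fun M => (measurableSet_heavyPoints (μ := μ) (Λ := Λ) (s := s) M).compl.nullMeasurableSet)
      (fun M N hMN => compl_subset_compl.2 (monotone_heavyPoints hMN)) ⟨0, measure_ne_top μ _⟩
    rwa [← compl_iUnion, (mem_ae_iff.1 h : μ (⋃ M, heavyPoints μ Λ s M)ᶜ = 0)] at hlim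
  exact (ENNReal.tendsto_toReal_zero_iff fun M => measure_ne_top μ _).2 tendsto_measure

lemma exists_finset_isCover_heavyPoints [OpensMeasurableSpace X] (M n : ℕ) :
    ∃ F : Finset X, IsCover (2 * (Λ ^ n)⁻¹) (heavyPoints μ Λ s M) F ∧
      F.card * Real.exp (-(n * s)) ≤ M * μ.real univ := by
  have cover_le : (coveringNumber (2 * (Λ ^ n)⁻¹) (heavyPoints μ Λ s M) : ℝ≥0∞) *
      ENNReal.ofReal (Real.exp (-(n * s))) ≤ ((M : ℝ≥0) • μ) univ :=
    coveringNumber_mul_le_measure_univ fun x hx => by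
      refine ENNReal.ofReal_le_of_le_toReal ?_
      simpa [Measure.real] using hx n
  have cover_ne_top : coveringNumber (2 * (Λ ^ n)⁻¹) (heavyPoints μ Λ s M) ≠ ⊤ := by
    intro htop
    rw [htop, ENat.toENNReal_top, ENNReal.top_mul (by simp [Real.exp_pos])] at cover_le
    exact measure_ne_top _ _ (top_le_iff.1 cover_le)
  lift minimalCover (2 * (Λ ^ n)⁻¹) (heavyPoints μ Λ s M) to Finset X
    using finite_minimalCover with F hF
  refine ⟨F, hF ▸ isCover_minimalCover cover_ne_top, ?_⟩
  rw [← encard_minimalCover cover_ne_top, ← hF, encard_coe_eq_coe_finsetCard] at cover_le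
  have := ENNReal.toReal_mono (measure_ne_top _ _) cover_le
  simpa [Measure.real, Real.exp_nonneg] using this

end HeavyPoints

section LocalDimension

variable {X : Type*} [PseudoMetricSpace X]

lemma setOf_dist_lt (x : X) (r : ℝ) : {y | dist x y < r} = ball x r := by
  ext y
  exact mem_ball'.symm

variable [MeasurableSpace X] {μ : Measure X} {x : X} {c : ℝ}

lemma limsup_lt_of_upperLocalDim_lt (hx : upperLocalDim dist μ x < ENNReal.ofReal c) :
    limsup (fun r : ℝ => ENNReal.ofReal (Real.log (μ.real (ball x r)) / Real.log r)) (𝓝[>] 0) <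
      ENNReal.ofReal c := by
  have not_null : ¬∃ r > 0, μ {y | dist x y < r} = 0 := fun hnull =>
    hx.ne_top (if_pos hnull)
  rw [upperLocalDim, if_neg not_null] at hx
  simpa only [setOf_dist_lt, Measure.real] using hx

variable [IsFiniteMeasure μ]

lemma measureReal_ball_pos_of_upperLocalDim_ne_top (hx : upperLocalDim dist μ x ≠ ⊤) {r : ℝ}
    (hr : 0 < r) : 0 < μ.real (ball x r) := by
  rw [← setOf_dist_lt]
  refine ENNReal.toReal_pos (fun hnull => hx ?_) (measure_ne_top _ _)
  exact if_pos ⟨r, hr, hnull⟩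

lemma eventually_rpow_lt_measureReal_ball (hx : upperLocalDim dist μ x < ENNReal.ofReal c) :
    ∀ᶠ r in 𝓝[>] 0, r ^ c < μ.real (ball x r) := by
  have ball_pos {r : ℝ} (hr : 0 < r) := measureReal_ball_pos_of_upperLocalDim_ne_top hx.ne_top hr
  filter_upwards [eventually_lt_of_limsup_lt (limsup_lt_of_upperLocalDim_lt hx),
    Ioo_mem_nhdsGT one_pos] with r hrc hr
  have hlog : Real.log (μ.real (ball x r)) / Real.log r < c :=
    (ENNReal.ofReal_lt_ofReal_iff'.1 hrc).1
  rw [div_lt_iff_of_neg (Real.log_neg hr.1 hr.2)] at hlog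
  rwa [← Real.log_lt_log_iff (Real.rpow_pos_of_pos hr.1 c) (ball_pos hr.1), Real.log_rpow hr.1]

lemma mem_iUnion_heavyPoints_of_upperLocalDim_lt {Λ : ℝ≥0} (hΛ : 1 < Λ)
    (hx : upperLocalDim dist μ x < ENNReal.ofReal c) :
    x ∈ ⋃ M, heavyPoints μ Λ (c * Real.log Λ) M := by
  have hΛ' : (1 : ℝ) < Λ := by exact_mod_cast hΛ
  have radius_pos (n : ℕ) : 0 < ((Λ : ℝ) ^ n)⁻¹ := by positivity
  have radius_tendsto : Tendsto (fun n : ℕ => ((Λ : ℝ) ^ n)⁻¹) atTop (𝓝[>] 0) :=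
    tendsto_nhdsWithin_iff.2 ⟨(tendsto_pow_atTop_atTop_of_one_lt hΛ').inv_tendsto_atTop,
      Eventually.of_forall radius_pos⟩
  have exp_eq (n : ℕ) : Real.exp (-(n * (c * Real.log Λ))) = ((Λ : ℝ) ^ n)⁻¹ ^ c := by
    rw [Real.rpow_def_of_pos (radius_pos n), Real.log_inv, Real.log_pow]
    ring_nf
  have isBigO : (fun n : ℕ => Real.exp (-(n * (c * Real.log Λ)))) =O[atTop]
      fun n : ℕ => μ.real (ball x (Λ ^ n)⁻¹) := by
    refine Asymptotics.IsBigO.of_bound' ?_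
    filter_upwards [radius_tendsto.eventually (eventually_rpow_lt_measureReal_ball hx)] with n hn
    rw [exp_eq, Real.norm_of_nonneg measureReal_nonneg, Real.norm_of_nonneg (by positivity)]
    exact hn.le
  have mass_ne_zero (n : ℕ) : μ.real (ball x (Λ ^ n)⁻¹) ≠ 0 :=
    (measureReal_ball_pos_of_upperLocalDim_ne_top hx.ne_top (radius_pos n)).ne'
  obtain ⟨M, hM⟩ :=
    (Asymptotics.isBigO_nat_atTop_iff fun n hn => absurd hn (mass_ne_zero n)).1 isBigO
  obtain ⟨N, hN⟩ := exists_nat_ge M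
  refine mem_iUnion.2 ⟨N, fun n => ?_⟩
  calc Real.exp (-(n * (c * Real.log Λ))) ≤ M * μ.real (ball x (Λ ^ n)⁻¹) := by
        simpa [abs_of_nonneg] using hM n
    _ ≤ N * μ.real (ball x (Λ ^ n)⁻¹) := by gcongr

end LocalDimension

section EntropyBound

variable {X : Type*} [PseudoMetricSpace X] [MeasurableSpace X] {μ : Measure X}
  [IsProbabilityMeasure μ] {T : X → X} {Λ : ℝ≥0} {s : ℝ}

lemma exists_codebook_heavyPoints [OpensMeasurableSpace X] {α : Type*} [Nonempty α] {f : X → α}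
    {B : Set X} (hΛ : 1 < Λ) (hT : LipschitzWith Λ T)
    (hB : ∀ᶠ p : X × X in uniformity X, p.1 ∉ B → p.2 ∉ B → f p.1 = f p.2) (M : ℕ) :
    ∃ m : ℕ, ∀ n : ℕ, ∃ C : Finset (Fin n → α), C.card ≤ M * Real.exp ((n + m) * s) ∧
      ∀ x ∈ heavyPoints μ Λ s M, ∃ w ∈ C, ∀ i : Fin n, T^[i] x ∉ B → itinerary T f n x i = w i := by
  have hΛ' : (1 : ℝ) < Λ := by exact_mod_cast hΛ
  obtain ⟨ρ, hρ, hBρ⟩ := Metric.uniformity_basis_dist.eventually_iff.1 hB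
  obtain ⟨m, hm⟩ : ∃ m : ℕ, (Λ : ℝ)⁻¹ ^ m < ρ / 4 :=
    exists_pow_lt_of_lt_one (by positivity) (inv_lt_one_of_one_lt₀ hΛ')
  refine ⟨m, fun n => ?_⟩
  obtain ⟨F, hF, hF_card⟩ := exists_finset_isCover_heavyPoints (μ := μ) (Λ := Λ) (s := s) M (n + m)
  have diam_lt : (Λ : ℝ) ^ n * (2 * (2 * (Λ ^ (n + m))⁻¹ : ℝ≥0)) < ρ := by
    calc (Λ : ℝ) ^ n * (2 * (2 * (Λ ^ (n + m))⁻¹ : ℝ≥0)) = 4 * (Λ : ℝ)⁻¹ ^ m := by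
          have : (Λ : ℝ) ≠ 0 := by positivity
          push_cast
          rw [pow_add, inv_pow]
          field_simp
          norm_num
      _ < ρ := by linarith
  obtain ⟨C, hCF, hC⟩ := exists_codebook_of_isCover hΛ.le hT
    (fun x hx y hy hxy => hBρ (x := (x, y)) hxy hx hy) hF diam_lt
  refine ⟨C, ?_, hC⟩
  calc (C.card : ℝ) ≤ F.card := by exact_mod_cast hCF
    _ ≤ M * Real.exp ((n + m) * s) := by
        rw [Real.exp_neg, mul_inv_le_iff₀ (Real.exp_pos _)] at hF_card
        simpa using hF_card

variable {α : Type*} [Fintype α] [MeasurableSpace α] [MeasurableSingletonClass α] {f : X → α}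

lemma liminf_partitionEntropy_itinerary_div_le_of_nonempty [OpensMeasurableSpace X] (hΛ : 1 < Λ)
    (hT : LipschitzWith Λ T) (hμ : MeasurePreserving T μ μ) (hf : Measurable f) {B : Set X}
    (hB : MeasurableSet B)
    (hB_unif : ∀ᶠ p : X × X in uniformity X, p.1 ∉ B → p.2 ∉ B → f p.1 = f p.2) {M : ℕ}
    (hM : (heavyPoints μ Λ s M).Nonempty) {β : ℝ} (hβ : 0 ≤ β) :
    liminf (fun n : ℕ => partitionEntropy μ (itinerary T f n) / n) atTop ≤
      s + (Fintype.card α * Real.exp (-β) + β * (μ.real B + μ.real (heavyPoints μ Λ s M)ᶜ)) := by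
  set err := Fintype.card α * Real.exp (-β) + β * (μ.real B + μ.real (heavyPoints μ Λ s M)ᶜ)
  obtain ⟨z, hz⟩ := hM
  have : Nonempty α := ⟨f z⟩
  obtain ⟨m, hm⟩ := exists_codebook_heavyPoints (μ := μ) (s := s) hΛ hT hB_unif M
  have entropy_le (n : ℕ) :
      partitionEntropy μ (itinerary T f n) ≤ Real.log M + (n + m) * s + n * err := by
    obtain ⟨C, hC_card, hC⟩ := hm n
    have hC_nonempty : C.Nonempty := (hC z hz).imp fun _ hw => hw.1
    have card_pos : (0 : ℝ) < C.card := by exact_mod_cast hC_nonempty.card_pos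
    have M_ne_zero : (M : ℝ) ≠ 0 := by
      intro h
      simp [h, card_pos.not_ge] at hC_card
    refine (partitionEntropy_itinerary_le hμ hf (measurableSet_heavyPoints M) hB hC_nonempty hC
      hβ).trans ?_
    gcongr
    rw [← Real.log_exp ((n + m) * s), ← Real.log_mul M_ne_zero (Real.exp_ne_zero _)]
    exact Real.log_le_log card_pos hC_card
  have bound_tendsto : Tendsto (fun n : ℕ => (Real.log M + m * s) / n + (s + err)) atTop
      (𝓝 (s + err)) := by
    simpa using (tendsto_const_div_atTop_nhds_zero_nat (Real.log M + m * s)).add_const (s + err)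
  refine (liminf_le_liminf ?_ ?_ bound_tendsto.isCoboundedUnder_ge).trans_eq
    bound_tendsto.liminf_eq
  · filter_upwards [eventually_gt_atTop 0] with n hn
    have : (0 : ℝ) < n := by exact_mod_cast hn
    calc partitionEntropy μ (itinerary T f n) / n
        ≤ (Real.log M + (n + m) * s + n * err) / n := by gcongr; exact entropy_le n
      _ = (Real.log M + m * s) / n + (s + err) := by field_simp; ring
  · exact isBoundedUnder_of ⟨0, fun n => div_nonneg (partitionEntropy_nonneg μ _) n.cast_nonneg⟩

lemma liminf_partitionEntropy_itinerary_div_le [BorelSpace X] (hΛ : 1 < Λ)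
    (hT : LipschitzWith Λ T) (hμ : MeasurePreserving T μ μ) (hf : Measurable f)
    (h : ∀ᵐ x ∂μ, x ∈ ⋃ M, heavyPoints μ Λ s M) :
    liminf (fun n : ℕ => partitionEntropy μ (itinerary T f n) / n) atTop ≤ s := by
  set entropyRate := liminf (fun n : ℕ => partitionEntropy μ (itinerary T f n) / n) atTop
  obtain ⟨z, hz⟩ := h.exists
  obtain ⟨M₀, hM₀⟩ := mem_iUnion.1 hz
  have le_of_exceptional {B : Set X} (hB : MeasurableSet B)
      (hB_unif : ∀ᶠ p : X × X in uniformity X, p.1 ∉ B → p.2 ∉ B → f p.1 = f p.2) {β : ℝ}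
      (hβ : 0 ≤ β) :
      entropyRate ≤ s + (Fintype.card α * Real.exp (-β) + β * (μ.real B + 0)) := by
    refine ge_of_tendsto ((((tendsto_measureReal_compl_heavyPoints h).const_add _).const_mul β
      |>.const_add _).const_add s) ?_
    filter_upwards [eventually_ge_atTop M₀] with M hM
    exact liminf_partitionEntropy_itinerary_div_le_of_nonempty hΛ hT hμ hf hB hB_unif
      ⟨z, monotone_heavyPoints hM hM₀⟩ hβ
  have le_of_penalty {β : ℝ} (hβ : 0 ≤ β) :
      entropyRate ≤ s + Fintype.card α * Real.exp (-β) := by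
    refine le_of_forall_pos_le_add fun ε hε => ?_
    obtain ⟨δ, hδ, hδε⟩ := exists_pos_mul_lt hε β
    obtain ⟨B, hB, hBδ, hB_unif⟩ := exists_measurableSet_lt_eventually_uniformity_eq μ hf
      (ENNReal.ofReal_pos.2 hδ).ne'
    have hBδ' : μ.real B ≤ δ := ENNReal.toReal_le_of_le_ofReal hδ.le hBδ.le
    calc entropyRate ≤ s + (Fintype.card α * Real.exp (-β) + β * (μ.real B + 0)) :=
          le_of_exceptional hB hB_unif hβ
      _ ≤ s + (Fintype.card α * Real.exp (-β) + β * (δ + 0)) := by gcongr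
      _ ≤ s + Fintype.card α * Real.exp (-β) + ε := by linarith
  have penalty_tendsto : Tendsto (fun β : ℝ => s + Fintype.card α * Real.exp (-β)) atTop (𝓝 s) := by
    simpa using (Real.tendsto_exp_neg_atTop_nhds_zero.const_mul (Fintype.card α : ℝ)).const_add s
  exact ge_of_tendsto penalty_tendsto ((eventually_ge_atTop 0).mono fun β => le_of_penalty)

lemma kolmogorovSinaiEntropy_le_of_ae_mem_iUnion_heavyPoints [BorelSpace X] (hΛ : 1 < Λ)
    (hT : LipschitzWith Λ T) (hμ : MeasurePreserving T μ μ)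
    (h : ∀ᵐ x ∂μ, x ∈ ⋃ M, heavyPoints μ Λ s M) :
    kolmogorovSinaiEntropy T μ ≤ ENNReal.ofReal s :=
  iSup_le fun _ => iSup_le fun _ => iSup_le fun hf =>
    ENNReal.ofReal_le_ofReal (liminf_partitionEntropy_itinerary_div_le hΛ hT hμ hf h)

end EntropyBound

lemma ae_entropy_div_log_le_of_upperLocalDim_lt {X : Type*} [PseudoMetricSpace X]
    [MeasurableSpace X] [BorelSpace X] {T : X → X} {Λ : ℝ≥0} (hΛ : 1 < Λ)
    (hT : LipschitzWith Λ T) {μ : Measure X} [IsProbabilityMeasure μ] (hμ : Ergodic T μ) (c : ℝ) :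
    ∀ᵐ x ∂μ, upperLocalDim dist μ x < ENNReal.ofReal c →
      kolmogorovSinaiEntropy T μ / ENNReal.ofReal (Real.log Λ) ≤ ENNReal.ofReal c := by
  let E := ⋃ M, heavyPoints μ Λ (c * Real.log Λ) M
  have hE : MeasurableSet E := MeasurableSet.iUnion measurableSet_heavyPoints
  have hE_preimage : E ⊆ T ⁻¹' E :=
    iUnion_heavyPoints_subset_preimage (one_pos.trans hΛ) hT hμ.toMeasurePreserving
  have log_nonneg : 0 ≤ Real.log Λ := Real.log_nonneg (by exact_mod_cast hΛ.le)
  rcases hμ.ae_empty_or_univ_of_ae_le_preimage hE.nullMeasurableSet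
    (LE.le.eventuallyLE hE_preimage) with hE_null | hE_full
  · filter_upwards [eventuallyEq_empty.1 hE_null] with x hxE hx
    exact absurd (mem_iUnion_heavyPoints_of_upperLocalDim_lt hΛ hx) hxE
  · refine Eventually.of_forall fun x _ => ENNReal.div_le_of_le_mul ?_
    rw [← ENNReal.ofReal_mul' log_nonneg]
    exact kolmogorovSinaiEntropy_le_of_ae_mem_iUnion_heavyPoints hΛ hT hμ.toMeasurePreserving
      (eventuallyEq_univ.1 hE_full)

theorem upperLocalDim_ge_entropy_div_logLipschitz_general {X : Type*} [PseudoMetricSpace X]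
    [MeasurableSpace X] [BorelSpace X] {T : X → X} {Λ : ℝ≥0} (hΛ : 1 < Λ)
    (hLip : LipschitzWith Λ T) {μ : Measure X} [IsProbabilityMeasure μ] (herg : Ergodic T μ) :
    ∀ᵐ x ∂μ,
      kolmogorovSinaiEntropy T μ / ENNReal.ofReal (Real.log Λ) ≤ upperLocalDim dist μ x := by
  have ae_rat := ae_all_iff.2 fun q : ℚ => ae_entropy_div_log_le_of_upperLocalDim_lt hΛ hLip herg q
  filter_upwards [ae_rat] with x hx
  by_contra! hlt
  obtain ⟨q, -, hxq, hqh⟩ := ENNReal.lt_iff_exists_rat_btwn.1 hlt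
  exact (hx q hxq).not_gt hqh

/-- Let `X` be a Polish metric space, `T : X → X` a bijection which is
Lipschitz with constant `Λ > 1` and whose inverse is Lipschitz, and `μ` an ergodic
`T`-invariant Borel probability measure. Then `d̄_μ(x) ≥ h_μ(T) / log Λ` for `μ`-a.e. `x`
(equivalently, `dim_P^-(μ) ≥ h_μ(T) / log Λ`). -/
theorem upperLocalDim_ge_entropy_div_logLipschitz {X : Type*} [MetricSpace X]
    [CompleteSpace X] [TopologicalSpace.SeparableSpace X]
    [MeasurableSpace X] [BorelSpace X]
    (T S : X → X) (hST : Function.LeftInverse S T) (hTS : Function.RightInverse S T)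
    (Λ : ℝ≥0) (hΛ : 1 < Λ) (hLip : LipschitzWith Λ T)
    (K' : ℝ≥0) (hK' : LipschitzWith K' S)
    (μ : Measure X) [IsProbabilityMeasure μ] (herg : Ergodic T μ) :
    ∀ᵐ x ∂μ,
      kolmogorovSinaiEntropy T μ / ENNReal.ofReal (Real.log (Λ : ℝ))
        ≤ upperLocalDim dist μ x :=
  upperLocalDim_ge_entropy_div_logLipschitz_general hΛ hLip herg
end
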